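/- Let T be a right H-comodule. Then: (i) the map δ : H ⊗ T → (H ⊗ T) ⊗ H, δ(x⊗t) = x⁽²⁾ ⊗ t₍₀₎ ⊗ x⁽³⁾ t₍₁₎ S(x⁽¹⁾), is a coassociative and counital right H-comodule structure on H ⊗ T; (ii) the map T → H ⊗ T, t ↦ 1 ⊗ t, is a morphism of right H-comodules; (iii) the map H ⊗ H ⊗ T → H ⊗ T, x ⊗ y ⊗ t ↦ xy ⊗ t, is a morphism of right H-comodules, where H ⊗ H ⊗ T carries the coaction x ⊗ y ⊗ t ↦ x⁽²⁾ ⊗ y⁽²⁾ ⊗ t₍₀₎ ⊗ x⁽³⁾ y⁽³⁾ t₍₁₎ S(y⁽¹⁾) S(x⁽¹⁾) obtained by applying the construction of (i) twice. -/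

import Mathlib

/-!
# Statement 16

`k` a field, `H` a Hopf algebra over `k`, `T` a right `H`-comodule with coaction
`ρT(t) = t₍₀₎ ⊗ t₍₁₎`.  Then:
(i) `δ(x ⊗ t) = x⁽²⁾ ⊗ t₍₀₎ ⊗ x⁽³⁾ t₍₁₎ S(x⁽¹⁾)` is a coassociative counital right
`H`-comodule structure on `H ⊗ T` (the map `coact` below);
(ii) `t ↦ 1 ⊗ t` is a morphism of right `H`-comodules `T → H ⊗ T`;
(iii) `x ⊗ y ⊗ t ↦ x y ⊗ t` is a morphism of right `H`-comodules, where `H ⊗ (H ⊗ T)` carries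
the coaction obtained by applying the construction of (i) twice.
-/

open TensorProduct

noncomputable section

variable (k : Type) [Field k]
variable (H : Type) [Ring H] [HopfAlgebra k H]

/-- The coaction `δ(x ⊗ t) = (x⁽²⁾ ⊗ t₍₀₎) ⊗ x⁽³⁾ t₍₁₎ S(x⁽¹⁾)` on `H ⊗ T`, for any
right `H`-comodule `(T, ρT)`. -/
def coact (T : Type) [AddCommGroup T] [Module k T] (ρT : T →ₗ[k] T ⊗[k] H) :
    H ⊗[k] T →ₗ[k] (H ⊗[k] T) ⊗[k] H :=
  (LinearMap.lTensor (H ⊗[k] T)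
      ((LinearMap.mul' k H) ∘ₗ (LinearMap.lTensor H (LinearMap.mul' k H)))) ∘ₗ
    (TensorProduct.assoc k H T (H ⊗[k] (H ⊗[k] H))).symm.toLinearMap ∘ₗ
    (LinearMap.lTensor H (TensorProduct.leftComm k H T (H ⊗[k] H)).toLinearMap) ∘ₗ
    (LinearMap.lTensor H (LinearMap.lTensor H
      (LinearMap.lTensor T (TensorProduct.comm k H H).toLinearMap))) ∘ₗ
    (LinearMap.lTensor H (LinearMap.lTensor H
      (TensorProduct.leftComm k H T H).toLinearMap)) ∘ₗ
    (LinearMap.lTensor H (TensorProduct.leftComm k H H (T ⊗[k] H)).toLinearMap) ∘ₗ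
    (TensorProduct.assoc k H H (H ⊗[k] (T ⊗[k] H))).toLinearMap ∘ₗ
    (LinearMap.rTensor (H ⊗[k] (T ⊗[k] H)) (TensorProduct.comm k H H).toLinearMap) ∘ₗ
    (TensorProduct.assoc k (H ⊗[k] H) H (T ⊗[k] H)).toLinearMap ∘ₗ
    (LinearMap.rTensor (T ⊗[k] H) (TensorProduct.assoc k H H H).symm.toLinearMap) ∘ₗ
    (LinearMap.rTensor (T ⊗[k] H)
      (LinearMap.rTensor (H ⊗[k] H) (HopfAlgebra.antipode (R := k)))) ∘ₗ
    (LinearMap.rTensor (T ⊗[k] H)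
      ((LinearMap.lTensor H (Coalgebra.comul (R := k))) ∘ₗ (Coalgebra.comul (R := k)))) ∘ₗ
    (LinearMap.lTensor H ρT)

/-- The multiplication map `H ⊗ (H ⊗ T) → H ⊗ T`, `x ⊗ (y ⊗ t) ↦ x y ⊗ t`. -/
def actHT (T : Type) [AddCommGroup T] [Module k T] :
    H ⊗[k] (H ⊗[k] T) →ₗ[k] H ⊗[k] T :=
  (LinearMap.rTensor T (LinearMap.mul' k H)) ∘ₗ
    (TensorProduct.assoc k H H T).symm.toLinearMap

section Helpers

open Coalgebra HopfAlgebra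

variable {k H}
variable {T : Type} [AddCommGroup T] [Module k T]

/-- `Δ²` as a linear map. -/
def comul2 : H →ₗ[k] H ⊗[k] (H ⊗[k] H) :=
  (LinearMap.lTensor H (Coalgebra.comul (R := k))) ∘ₗ (Coalgebra.comul (R := k))

/-- `(a ⊗ b ⊗ c) ⊗ (t ⊗ h) ↦ (b ⊗ t) ⊗ c h S(a)`. -/
def PP : (H ⊗[k] (H ⊗[k] H)) ⊗[k] (T ⊗[k] H) →ₗ[k] (H ⊗[k] T) ⊗[k] H :=
  (LinearMap.lTensor (H ⊗[k] T)
      ((LinearMap.mul' k H) ∘ₗ (LinearMap.lTensor H (LinearMap.mul' k H)))) ∘ₗ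
    (TensorProduct.assoc k H T (H ⊗[k] (H ⊗[k] H))).symm.toLinearMap ∘ₗ
    (LinearMap.lTensor H (TensorProduct.leftComm k H T (H ⊗[k] H)).toLinearMap) ∘ₗ
    (LinearMap.lTensor H (LinearMap.lTensor H
      (LinearMap.lTensor T (TensorProduct.comm k H H).toLinearMap))) ∘ₗ
    (LinearMap.lTensor H (LinearMap.lTensor H
      (TensorProduct.leftComm k H T H).toLinearMap)) ∘ₗ
    (LinearMap.lTensor H (TensorProduct.leftComm k H H (T ⊗[k] H)).toLinearMap) ∘ₗ
    (TensorProduct.assoc k H H (H ⊗[k] (T ⊗[k] H))).toLinearMap ∘ₗ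
    (LinearMap.rTensor (H ⊗[k] (T ⊗[k] H)) (TensorProduct.comm k H H).toLinearMap) ∘ₗ
    (TensorProduct.assoc k (H ⊗[k] H) H (T ⊗[k] H)).toLinearMap ∘ₗ
    (LinearMap.rTensor (T ⊗[k] H) (TensorProduct.assoc k H H H).symm.toLinearMap) ∘ₗ
    (LinearMap.rTensor (T ⊗[k] H)
      (LinearMap.rTensor (H ⊗[k] H) (HopfAlgebra.antipode (R := k))))

theorem PP_tmul (a b c h : H) (t : T) :
    PP (k := k) ((a ⊗ₜ (b ⊗ₜ c)) ⊗ₜ (t ⊗ₜ h)) = (b ⊗ₜ[k] t) ⊗ₜ[k] (c * (h * antipode k a)) := by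
  simp [PP]

theorem coact_tmul (ρT : T →ₗ[k] T ⊗[k] H) (x : H) (t : T) :
    coact k H T ρT (x ⊗ₜ t) = PP (comul2 x ⊗ₜ ρT t) := rfl

/-- `((a1 ⊗ a2) ⊗ (b ⊗ (c1 ⊗ c2))) ⊗ (t ⊗ (h1 ⊗ h2)) ↦ ((b ⊗ t) ⊗ c1 h1 S(a2)) ⊗ c2 h2 S(a1)`. -/
def QQ : ((H ⊗[k] H) ⊗[k] (H ⊗[k] (H ⊗[k] H))) ⊗[k] (T ⊗[k] (H ⊗[k] H)) →ₗ[k]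
    ((H ⊗[k] T) ⊗[k] H) ⊗[k] H :=
  (TensorProduct.assoc k (H ⊗[k] T) H H).symm.toLinearMap ∘ₗ
  (LinearMap.lTensor (H ⊗[k] T) (LinearMap.mul' k (H ⊗[k] H) ∘ₗ
    LinearMap.lTensor (H ⊗[k] H) (LinearMap.mul' k (H ⊗[k] H)))) ∘ₗ
  (TensorProduct.assoc k H T _).symm.toLinearMap ∘ₗ
  LinearMap.lTensor H ((TensorProduct.leftComm k (H ⊗[k] H) T _).toLinearMap) ∘ₗ
  LinearMap.lTensor H (LinearMap.lTensor (H ⊗[k] H) (TensorProduct.assoc k T _ _).toLinearMap) ∘ₗ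
  LinearMap.lTensor H (TensorProduct.assoc k (H ⊗[k] H) _ _).toLinearMap ∘ₗ
  (TensorProduct.assoc k H _ _).toLinearMap ∘ₗ
  LinearMap.rTensor (H ⊗[k] H) (TensorProduct.assoc k H _ _).toLinearMap ∘ₗ
  (TensorProduct.comm k _ _).toLinearMap ∘ₗ
  (TensorProduct.assoc k _ _ _).toLinearMap ∘ₗ
  LinearMap.rTensor _ (LinearMap.rTensor _ ((TensorProduct.map (antipode k) (antipode k)) ∘ₗ
    (TensorProduct.comm k H H).toLinearMap))

theorem QQ_tmul_aux (a C D : H ⊗[k] H) (b : H) (t : T) :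
    QQ (k := k) ((a ⊗ₜ (b ⊗ₜ C)) ⊗ₜ (t ⊗ₜ D)) =
      (TensorProduct.assoc k (H ⊗[k] T) H H).symm ((b ⊗ₜ[k] t) ⊗ₜ[k]
        (C * (D * TensorProduct.map (antipode k) (antipode k) (TensorProduct.comm k H H a)))) := by
  simp [QQ]

/-- reassociation -/
def R4 : H ⊗[k] ((H ⊗[k] H) ⊗[k] H) →ₗ[k] (H ⊗[k] H) ⊗[k] (H ⊗[k] H) :=
  (TensorProduct.assoc k H H _).symm.toLinearMap ∘ₗ
    LinearMap.lTensor H (TensorProduct.assoc k H H H).toLinearMap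

theorem R4_comul :
    R4 ∘ₗ LinearMap.lTensor H (LinearMap.rTensor H (comul (R := k) (A := H))) ∘ₗ comul2 =
    TensorProduct.map (comul (R := k)) (comul (R := k)) ∘ₗ comul (R := k) := by
  simp only [R4, comul2, coassoc_simps]

theorem R4_mul (X : H ⊗[k] (H ⊗[k] H)) :
    LinearMap.mul' k (H ⊗[k] H) (LinearMap.rTensor (H ⊗[k] H)
      (TensorProduct.map (antipode k) (antipode k) ∘ₗ (TensorProduct.comm k H H).toLinearMap)
      (R4 (LinearMap.lTensor H (LinearMap.rTensor H (comul (R := k) (A := H))) X))) =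
    1 ⊗ₜ LinearMap.mul' k H (LinearMap.rTensor H (antipode k) (LinearMap.lTensor H
      ((TensorProduct.lid k H).toLinearMap ∘ₗ LinearMap.rTensor H (counit (R := k))) X)) := by
  induction X with
  | zero => simp
  | add Z W hZ hW => simp only [tmul_add, map_add, hZ, hW]
  | tmul a Y =>
  induction Y with
  | zero => simp
  | add Z W hZ hW => simp only [tmul_add, map_add, hZ, hW]
  | tmul b c =>
  have key : ∀ B : H ⊗[k] H, LinearMap.mul' k (H ⊗[k] H) (LinearMap.rTensor (H ⊗[k] H)
      (TensorProduct.map (antipode k) (antipode k) ∘ₗ (TensorProduct.comm k H H).toLinearMap)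
      (R4 (a ⊗ₜ (B ⊗ₜ c)))) =
      LinearMap.mul' k H (LinearMap.rTensor H (antipode k) B) ⊗ₜ (antipode k a * c) := by
    intro B
    induction B with
    | zero => simp
    | add Z W hZ hW => simp only [tmul_add, add_tmul, map_add, hZ, hW]
    | tmul b c => simp [R4]
  simp only [LinearMap.lTensor_tmul, LinearMap.rTensor_tmul, key,
    mul_antipode_rTensor_comul_apply]
  simp [Algebra.algebraMap_eq_smul_one, smul_tmul]

theorem comul_antipode (a : H) : comul (R := k) (antipode k a) =
    TensorProduct.map (antipode k) (antipode k) (TensorProduct.comm k H H (comul a)) := by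
  have hG : WithConv.toConv ((TensorProduct.map (antipode k) (antipode k) ∘ₗ
      (TensorProduct.comm k H H).toLinearMap) ∘ₗ comul (R := k)) *
      WithConv.toConv (comul (R := k) (A := H)) = 1 := by
    ext x
    have h1 := LinearMap.congr_fun (R4_comul (k := k) (H := H)) x
    have h2 := R4_mul (k := k) (comul2 x)
    simp only [LinearMap.comp_apply] at h1
    rw [h1] at h2
    rw [LinearMap.convMul_apply, LinearMap.convOne_apply]
    have h3 : LinearMap.lTensor H ((TensorProduct.lid k H).toLinearMap ∘ₗ
        LinearMap.rTensor H (counit (R := k))) (comul2 x) = comul (R := k) x := by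
      have h : ((TensorProduct.lid k H).toLinearMap ∘ₗ LinearMap.rTensor H (counit (R := k))) ∘ₗ
          comul (R := k) = LinearMap.id := by
        ext x; simp
      rw [comul2, LinearMap.comp_apply, ← LinearMap.comp_apply (LinearMap.lTensor _ _),
        ← LinearMap.lTensor_comp, h, LinearMap.lTensor_id, LinearMap.id_apply]
    rw [h3, mul_antipode_rTensor_comul_apply, ← LinearMap.comp_apply (LinearMap.rTensor _ _),
      LinearMap.rTensor_comp_map] at h2
    refine h2.trans ?_
    simp [Algebra.algebraMap_eq_smul_one, Algebra.TensorProduct.one_def]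
  have h := left_inv_eq_right_inv hG LinearMap.comul_right_inv
  exact (LinearMap.congr_fun (WithConv.toConv_injective h) a).symm

/-- reassociation -/
def RR : H ⊗[k] ((H ⊗[k] (H ⊗[k] H)) ⊗[k] H) →ₗ[k] (H ⊗[k] H) ⊗[k] (H ⊗[k] (H ⊗[k] H)) :=
  (TensorProduct.assoc k H H _).symm.toLinearMap ∘ₗ
    LinearMap.lTensor H (LinearMap.lTensor H (TensorProduct.assoc k H H H).toLinearMap ∘ₗ
      (TensorProduct.assoc k H (H ⊗[k] H) H).toLinearMap)

theorem RR_comul :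
    RR ∘ₗ LinearMap.lTensor H (LinearMap.rTensor H (comul2 (k := k) (H := H))) ∘ₗ comul2 =
    TensorProduct.map (comul (R := k)) (LinearMap.lTensor H (comul (R := k))) ∘ₗ comul2 := by
  simp only [RR, comul2, coassoc_simps]

theorem rhs_eq (X : H ⊗[k] (H ⊗[k] H)) (Z : T ⊗[k] H) :
    (TensorProduct.assoc k (H ⊗[k] T) H H).symm
      (LinearMap.lTensor (H ⊗[k] T) (comul (R := k)) (PP (X ⊗ₜ Z))) =
    QQ (TensorProduct.map (comul (R := k)) (LinearMap.lTensor H (comul (R := k))) X ⊗ₜ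
      LinearMap.lTensor T (comul (R := k)) Z) := by
  induction Z with
  | zero => simp
  | add Z W hZ hW => simp only [tmul_add, map_add, hZ, hW]
  | tmul t h =>
  induction X with
  | zero => simp
  | add Z W hZ hW => simp only [add_tmul, map_add, hZ, hW]
  | tmul a Y =>
  induction Y with
  | zero => simp
  | add Z W hZ hW => simp only [tmul_add, add_tmul, map_add, hZ, hW]
  | tmul b c =>
  simp only [PP_tmul, map_tmul, LinearMap.lTensor_tmul, QQ_tmul_aux, Bialgebra.comul_mul,
    comul_antipode]

theorem lhs_eq (ρT : T →ₗ[k] T ⊗[k] H) (X : H ⊗[k] (H ⊗[k] H)) (Z : T ⊗[k] H) :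
    LinearMap.rTensor H (coact k H T ρT) (PP (X ⊗ₜ Z)) =
    QQ (RR (LinearMap.lTensor H (LinearMap.rTensor H (comul2 (k := k) (H := H))) X) ⊗ₜ
      TensorProduct.assoc k T H H (LinearMap.rTensor H ρT Z)) := by
  induction Z with
  | zero => simp
  | add Z W hZ hW => simp only [tmul_add, map_add, hZ, hW]
  | tmul t h =>
  induction X with
  | zero => simp
  | add Z W hZ hW => simp only [add_tmul, map_add, hZ, hW]
  | tmul a Y =>
  induction Y with
  | zero => simp
  | add Z W hZ hW => simp only [tmul_add, add_tmul, map_add, hZ, hW]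
  | tmul b c =>
  simp only [PP_tmul, LinearMap.lTensor_tmul, LinearMap.rTensor_tmul, coact_tmul]
  generalize comul2 (k := k) b = B
  generalize ρT t = Z
  induction Z with
  | zero => simp
  | add Z W hZ hW => simp only [tmul_add, add_tmul, map_add, hZ, hW]
  | tmul t h₂ =>
  induction B with
  | zero => simp
  | add Z W hZ hW => simp only [tmul_add, add_tmul, map_add, hZ, hW]
  | tmul b1 Y =>
  induction Y with
  | zero => simp
  | add Z W hZ hW => simp only [tmul_add, add_tmul, map_add, hZ, hW]
  | tmul b2 b3 =>
  simp [PP_tmul, RR, QQ_tmul_aux]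

theorem counit_eq (X : H ⊗[k] (H ⊗[k] H)) (Z : T ⊗[k] H) :
    TensorProduct.rid k (H ⊗[k] T)
      (LinearMap.lTensor (H ⊗[k] T) (counit (R := k)) (PP (X ⊗ₜ Z))) =
    TensorProduct.lid k H (TensorProduct.map (counit (R := k))
      (TensorProduct.rid k H ∘ₗ LinearMap.lTensor H (counit (R := k))) X) ⊗ₜ[k]
      TensorProduct.rid k T (LinearMap.lTensor T (counit (R := k)) Z) := by
  induction Z with
  | zero => simp
  | add Z W hZ hW => simp only [tmul_add, map_add, hZ, hW]
  | tmul t h =>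
  induction X with
  | zero => simp
  | add Z W hZ hW => simp only [add_tmul, map_add, hZ, hW]
  | tmul a Y =>
  induction Y with
  | zero => simp
  | add Z W hZ hW => simp only [tmul_add, add_tmul, map_add, hZ, hW]
  | tmul b c =>
  simp [PP_tmul, tmul_smul, smul_tmul', smul_smul]
  congr 2
  ring

theorem counit_comul2 (x : H) :
    TensorProduct.lid k H (TensorProduct.map (counit (R := k))
      (TensorProduct.rid k H ∘ₗ LinearMap.lTensor H (counit (R := k))) (comul2 x)) = x := by
  have h : (TensorProduct.rid k H).toLinearMap ∘ₗ LinearMap.lTensor H (counit (R := k)) ∘ₗ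
      comul (R := k) = LinearMap.id := by
    ext x; simp
  rw [comul2, LinearMap.comp_apply, ← LinearMap.comp_apply (TensorProduct.map _ _),
    LinearMap.map_comp_lTensor, LinearMap.comp_assoc, h]
  exact congr(TensorProduct.lid k H $(rTensor_counit_comul (R := k) x)).trans (by simp)

theorem comul2_mul (x y : H) : comul2 (k := k) (x * y) = comul2 x * comul2 y := by
  simp only [comul2, LinearMap.comp_apply, Bialgebra.comul_mul]
  exact map_mul (Algebra.TensorProduct.map (AlgHom.id k H) (Bialgebra.comulAlgHom k H)) _ _

theorem mul_eq (X Y : H ⊗[k] (H ⊗[k] H)) (Z : T ⊗[k] H) :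
    PP ((X * Y) ⊗ₜ Z) = LinearMap.rTensor H (actHT k H T) (PP (X ⊗ₜ PP (Y ⊗ₜ Z))) := by
  induction Z with
  | zero => simp
  | add Z W hZ hW => simp only [tmul_add, map_add, hZ, hW]
  | tmul t h =>
  induction X with
  | zero => simp
  | add Z W hZ hW => simp only [add_mul, add_tmul, map_add, hZ, hW]
  | tmul a X =>
  induction X with
  | zero => simp
  | add Z W hZ hW => simp only [add_mul, tmul_add, add_tmul, map_add, hZ, hW]
  | tmul b c =>
  induction Y with
  | zero => simp
  | add Z W hZ hW => simp only [mul_add, tmul_add, add_tmul, map_add, hZ, hW]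
  | tmul a₂ X =>
  induction X with
  | zero => simp
  | add Z W hZ hW => simp only [mul_add, tmul_add, add_tmul, map_add, hZ, hW]
  | tmul b₂ c₂ =>
  simp [PP_tmul, actHT, antipode_mul_antidistrib, mul_assoc]

end Helpers

theorem stmt16 (T : Type) [AddCommGroup T] [Module k T] (ρT : T →ₗ[k] T ⊗[k] H)
    (hρ_coassoc : (LinearMap.rTensor H ρT) ∘ₗ ρT =
      (TensorProduct.assoc k T H H).symm.toLinearMap ∘ₗ
        (LinearMap.lTensor T (Coalgebra.comul (R := k))) ∘ₗ ρT)
    (hρ_counit : (TensorProduct.rid k T).toLinearMap ∘ₗ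
        (LinearMap.lTensor T (Coalgebra.counit (R := k))) ∘ₗ ρT = LinearMap.id) :
    -- (i) `coact` is a coassociative counital coaction on `H ⊗ T`
    ((LinearMap.rTensor H (coact k H T ρT)) ∘ₗ coact k H T ρT =
        (TensorProduct.assoc k (H ⊗[k] T) H H).symm.toLinearMap ∘ₗ
          (LinearMap.lTensor (H ⊗[k] T) (Coalgebra.comul (R := k))) ∘ₗ coact k H T ρT)
    ∧ ((TensorProduct.rid k (H ⊗[k] T)).toLinearMap ∘ₗ
        (LinearMap.lTensor (H ⊗[k] T) (Coalgebra.counit (R := k))) ∘ₗ coact k H T ρT =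
        LinearMap.id)
    -- (ii) `t ↦ 1 ⊗ t` is a morphism of right `H`-comodules
    ∧ (coact k H T ρT ∘ₗ (TensorProduct.mk k H T 1) =
        (LinearMap.rTensor H (TensorProduct.mk k H T 1)) ∘ₗ ρT)
    -- (iii) `x ⊗ y ⊗ t ↦ x y ⊗ t` is a morphism of right `H`-comodules, for the coaction
    -- on `H ⊗ (H ⊗ T)` obtained by applying the construction of (i) twice
    ∧ (coact k H T ρT ∘ₗ actHT k H T =
        (LinearMap.rTensor H (actHT k H T)) ∘ₗ coact k H (H ⊗[k] T) (coact k H T ρT)) := by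
  refine ⟨?_, ?_, ?_, ?_⟩
  · refine TensorProduct.ext' fun x t => ?_
    simp only [LinearMap.comp_apply, LinearEquiv.coe_coe, coact_tmul]
    rw [lhs_eq, rhs_eq]
    have h1 := LinearMap.congr_fun (RR_comul (k := k) (H := H)) x
    have h2 := LinearMap.congr_fun hρ_coassoc t
    simp only [LinearMap.comp_apply, LinearEquiv.coe_coe] at h1 h2
    rw [h1, h2, LinearEquiv.apply_symm_apply]
  · refine TensorProduct.ext' fun x t => ?_
    simp only [LinearMap.comp_apply, LinearEquiv.coe_coe, coact_tmul]
    have h2 := LinearMap.congr_fun hρ_counit t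
    simp only [LinearMap.comp_apply, LinearEquiv.coe_coe] at h2
    rw [counit_eq, counit_comul2, h2]
    rfl
  · ext t
    simp only [LinearMap.comp_apply, TensorProduct.mk_apply, coact_tmul]
    have h : comul2 (k := k) (1 : H) = 1 ⊗ₜ (1 ⊗ₜ 1) := by
      simp [comul2, Algebra.TensorProduct.one_def]
    rw [h]
    generalize ρT t = Z
    induction Z with
    | zero => simp
    | add Z W hZ hW => simp only [tmul_add, map_add, hZ, hW]
    | tmul t h => simp [PP_tmul]
  · refine TensorProduct.ext' fun x z => ?_
    induction z with
    | zero => simp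
    | add Z W hZ hW => simp only [tmul_add, map_add, hZ, hW]
    | tmul y t =>
    have h : actHT k H T (x ⊗ₜ (y ⊗ₜ t)) = (x * y) ⊗ₜ t := by simp [actHT]
    simp only [LinearMap.comp_apply, coact_tmul, h, comul2_mul, mul_eq]

end
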